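/- Franz's independence lemma: Let p ≥ 1 be a natural number and let S denote the set of residues j ∈ ℤ/p that are coprime to p (the units of ℤ/p). Suppose a : S → ℤ is a function satisfying (1) ∑_{j∈S} a_j = 0, (2) a_j = a_{−j} for every j ∈ S, and (3) for every complex number η with η^p = 1 and η ≠ 1 one has ∏_{j∈S} (η^j − 1)^{a_j} = 1, where η^j means η raised to any integer representative of j (each factor η^j − 1 is nonzero, and negative exponents a_j are interpreted via inverses in ℂ*). Then a_j = 0 for all j ∈ S. -/

import Mathlib

namespace Franz

open Filter Topology Complex HurwitzZeta

lemma franz_bound (n : ℕ) (s : ℝ) (h1 : 1 ≤ s) (h2 : s ≤ 2) :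
    |((n : ℝ) + 1) ^ (-s) - ((n : ℝ) + 2) ^ (-s)| ≤ 2 * (1 / (((n + 1 : ℕ) : ℝ) ^ 2)) := by
  have hn : (0 : ℝ) ≤ n := n.cast_nonneg
  have e : ((n : ℝ) + 2) ^ (-s) = ((n : ℝ) + 1) ^ (-s) * (1 + -(1 / ((n : ℝ) + 2))) ^ s := by
    have : 1 + -(1 / ((n : ℝ) + 2)) = ((n : ℝ) + 1) / (n + 2) := by field_simp; ring
    rw [this, Real.div_rpow (by positivity) (by positivity), Real.rpow_neg (by positivity),
      Real.rpow_neg (by positivity)]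
    field_simp
  have hB := one_add_mul_self_le_rpow_one_add (s := -(1 / ((n : ℝ) + 2)))
    (by rw [neg_le_neg_iff, div_le_one (by positivity)]; linarith) h1
  have hle : ((n : ℝ) + 2) ^ (-s) ≤ ((n : ℝ) + 1) ^ (-s) :=
    Real.rpow_le_rpow_of_nonpos (by positivity) (by linarith) (by linarith)
  rw [abs_of_nonneg (by linarith), e]
  have h3 : ((n : ℝ) + 1) ^ (-s) ≤ ((n : ℝ) + 1)⁻¹ := by
    rw [← Real.rpow_neg_one]
    exact Real.rpow_le_rpow_of_exponent_le (by linarith) (by linarith)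
  have h4 : 1 - (1 + -(1 / ((n : ℝ) + 2))) ^ s ≤ 2 * ((n : ℝ) + 1)⁻¹ := by
    have : s * (1 / ((n : ℝ) + 2)) ≤ 2 * ((n : ℝ) + 1)⁻¹ := by
      rw [← one_div]
      gcongr
      norm_num
    linarith
  have h0 : 0 ≤ ((n : ℝ) + 1) ^ (-s) := by positivity
  calc _ = ((n : ℝ) + 1) ^ (-s) * (1 - (1 + -(1 / ((n : ℝ) + 2))) ^ s) := by ring
    _ ≤ ((n : ℝ) + 1) ^ (-s) * (2 * ((n : ℝ) + 1)⁻¹) := by gcongr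
    _ ≤ ((n : ℝ) + 1)⁻¹ * (2 * ((n : ℝ) + 1)⁻¹) := by gcongr
    _ = _ := by push_cast; field_simp

/-- Abel summation: multiply `∑ c n w^n` by `1 - w`. -/
lemma franz_abel (c : ℕ → ℂ) (w L : ℂ) (h0 : c 0 = 0) (h : HasSum (fun n => c n * w ^ n) L) :
    HasSum (fun n : ℕ => (c (n + 1) - c (n + 2)) * w ^ (n + 2)) (c 1 * w - (1 - w) * L) := by
  have h1 : HasSum (fun n => c (n + 1) * w ^ (n + 1)) L := by
    simpa [h0] using (hasSum_nat_add_iff' 1).2 h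
  have h2 : HasSum (fun n => c (n + 2) * w ^ (n + 2)) (L - c 1 * w) := by
    simpa [h0, Finset.sum_range_succ] using (hasSum_nat_add_iff' 2).2 h
  have h3 := (h1.mul_left w).sub h2
  have e : c 1 * w - (1 - w) * L = w * L - (L - c 1 * w) := by ring
  rw [e]
  refine h3.congr_fun ?_
  intro n
  ring

lemma franz_summable : Summable (fun n : ℕ => 2 * (1 / (((n + 1 : ℕ) : ℝ) ^ 2))) :=
  ((summable_nat_add_iff 1).2 (Real.summable_one_div_nat_pow.2 one_lt_two)).mul_left 2

lemma franz_re_pos (z : ℂ) (hz : ‖z‖ = 1) (hz1 : z ≠ 1) : 0 < (1 - z).re := by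
  have := Complex.re_le_norm z
  rw [sub_re, one_re]
  rcases lt_or_eq_of_le (hz ▸ this) with h | h
  · linarith
  · exfalso
    apply hz1
    have h2 := Complex.sq_norm z
    rw [hz, Complex.normSq_apply, h] at h2
    apply Complex.ext
    · simpa using h
    · simp; nlinarith

lemma franz_log (z : ℂ) (hz : ‖z‖ = 1) (hz1 : z ≠ 1) :
    ∑' n : ℕ, (1 / ((n : ℂ) + 1) - 1 / ((n : ℂ) + 2)) * z ^ (n + 2) =
      z + (1 - z) * log (1 - z) := by
  have A : Tendsto (fun x : ℝ => ∑' n : ℕ, (1 / ((n : ℂ) + 1) - 1 / ((n : ℂ) + 2)) * (x * z) ^ (n + 2))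
      (𝓝[<] 1) (𝓝 (∑' n : ℕ, (1 / ((n : ℂ) + 1) - 1 / ((n : ℂ) + 2)) * z ^ (n + 2))) := by
    refine tendsto_tsum_of_dominated_convergence franz_summable ?_ ?_
    · intro n
      have : ContinuousAt (fun x : ℝ => (1 / ((n : ℂ) + 1) - 1 / ((n : ℂ) + 2)) * (x * z) ^ (n + 2)) 1 := by
        fun_prop
      simpa using this.tendsto.mono_left nhdsWithin_le_nhds
    · have : ∀ᶠ x : ℝ in 𝓝[<] 1, 0 < x :=
        nhdsWithin_le_nhds (lt_mem_nhds one_pos)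
      filter_upwards [this, self_mem_nhdsWithin] with x hx hx1 n
      rw [norm_mul, norm_pow, norm_mul, hz, mul_one, Complex.norm_real, Real.norm_of_nonneg hx.le]
      have hb := franz_bound n 1 le_rfl one_le_two
      have e : (1 / ((n : ℂ) + 1) - 1 / ((n : ℂ) + 2)) =
          ((((n : ℝ) + 1) ^ (-1 : ℝ) - ((n : ℝ) + 2) ^ (-1 : ℝ) : ℝ) : ℂ) := by
        simp [Real.rpow_neg_one]
      rw [e, Complex.norm_real, Real.norm_eq_abs]
      refine le_trans (mul_le_of_le_one_right (abs_nonneg _) ?_) hb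
      exact pow_le_one₀ hx.le (le_of_lt hx1)
  have hre := franz_re_pos z hz hz1
  have B : Tendsto (fun x : ℝ => (x * z) + (1 - x * z) * log (1 - x * z))
      (𝓝[<] 1) (𝓝 (z + (1 - z) * log (1 - z))) := by
    have : ContinuousAt (fun x : ℝ => (x * z) + (1 - x * z) * log (1 - x * z)) 1 := by
      have hs : (1 - ((1 : ℝ) : ℂ) * z) ∈ slitPlane := by
        left; simpa using hre
      have : ContinuousAt (fun x : ℝ => log (1 - x * z)) 1 := 
        ContinuousAt.clog (by fun_prop) hs
      fun_prop
    simpa using this.tendsto.mono_left nhdsWithin_le_nhds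
  refine tendsto_nhds_unique A (B.congr' ?_)
  have : ∀ᶠ x : ℝ in 𝓝[<] 1, 0 < x :=
    nhdsWithin_le_nhds (lt_mem_nhds one_pos)
  filter_upwards [this, self_mem_nhdsWithin] with x hx hx1
  have hw : ‖(x : ℂ) * z‖ < 1 := by
    rw [norm_mul, hz, mul_one, Complex.norm_real, Real.norm_of_nonneg hx.le]; exact hx1
  have h := hasSum_taylorSeries_neg_log hw
  have h' := franz_abel (fun n => 1 / (n : ℂ)) (x * z) _ (by simp)
    (h.congr_fun (fun n => by ring))
  have := h'.tsum_eq
  push_cast at this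
  rw [this]
  simp

lemma franz_expZeta (a : ℝ) (ha : (a : UnitAddCircle) ≠ 0) (z : ℂ)
    (hza : z = cexp (2 * Real.pi * I * a)) (hz : ‖z‖ = 1) (hz1 : z ≠ 1) :
    expZeta a 1 = - log (1 - z) := by
  have A : Tendsto (fun s : ℝ => ∑' n : ℕ,
        (((((n : ℝ) + 1) ^ (-s) - ((n : ℝ) + 2) ^ (-s) : ℝ)) : ℂ) * z ^ (n + 2))
      (𝓝[>] 1) (𝓝 (∑' n : ℕ, (1 / ((n : ℂ) + 1) - 1 / ((n : ℂ) + 2)) * z ^ (n + 2))) := by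
    refine tendsto_tsum_of_dominated_convergence franz_summable ?_ ?_
    · intro n
      have : ContinuousAt (fun s : ℝ => (((((n : ℝ) + 1) ^ (-s) - ((n : ℝ) + 2) ^ (-s) : ℝ)) : ℂ) * z ^ (n + 2)) 1 := by
        have h1 : Continuous (fun s : ℝ => ((n : ℝ) + 1) ^ (-s)) :=
          Real.continuous_const_rpow (by positivity) |>.comp continuous_neg
        have h2 : Continuous (fun s : ℝ => ((n : ℝ) + 2) ^ (-s)) :=
          Real.continuous_const_rpow (by positivity) |>.comp continuous_neg
        fun_prop
      simpa [Real.rpow_neg_one] using this.tendsto.mono_left nhdsWithin_le_nhds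
    · have : ∀ᶠ x : ℝ in 𝓝[>] 1, x < 2 :=
        nhdsWithin_le_nhds (gt_mem_nhds one_lt_two)
      filter_upwards [this, self_mem_nhdsWithin] with x hx hx1 n
      rw [norm_mul, norm_pow, hz, one_pow, mul_one, Complex.norm_real]
      exact franz_bound n x (le_of_lt hx1) hx.le
  have B : Tendsto (fun s : ℝ => z - (1 - z) * expZeta a s) (𝓝[>] 1)
      (𝓝 (z - (1 - z) * expZeta a 1)) := by
    have h := (differentiable_expZeta_of_ne_zero ha).continuous
    have : ContinuousAt (fun s : ℝ => z - (1 - z) * expZeta a s) 1 := by fun_prop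
    simpa using this.tendsto.mono_left nhdsWithin_le_nhds
  have C := tendsto_nhds_unique A (B.congr' ?_)
  · rw [franz_log z hz hz1] at C
    have : (1 - z) * (expZeta a 1 + log (1 - z)) = 0 := by linear_combination C
    rcases mul_eq_zero.1 this with h | h
    · exact absurd (sub_eq_zero.1 h).symm hz1
    · exact eq_neg_of_add_eq_zero_left h
  filter_upwards [self_mem_nhdsWithin] with s hs
  have hs' : (1 : ℝ) < s := hs
  have h := hasSum_expZeta_of_one_lt_re a (s := (s : ℂ)) (by simpa using hs')
  have h' := franz_abel (fun n => 1 / (n : ℂ) ^ (s : ℂ)) z _ 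
    (by simp; linarith)
    (h.congr_fun (fun n => by rw [hza, ← Complex.exp_nat_mul]; ring_nf))
  have := h'.tsum_eq
  simp only [Nat.cast_one, one_cpow, div_one, one_mul] at this
  rw [← this]
  congr 1
  ext n
  congr 1
  push_cast
  rw [Complex.ofReal_cpow (by positivity), Complex.ofReal_cpow (by positivity)]
  push_cast
  rw [Complex.cpow_neg, Complex.cpow_neg, one_div, one_div]

lemma franz_cosZeta {N : ℕ} [NeZero N] (j : ZMod N) (hj : j ≠ 0) :
    expZeta (ZMod.toAddCircle j) 1 + expZeta (ZMod.toAddCircle (-j)) 1 =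
      -2 * (Real.log ‖ZMod.stdAddChar j - 1‖ : ℂ) := by
  have key : ∀ k : ZMod N, k ≠ 0 →
      expZeta (ZMod.toAddCircle k) 1 = - log (1 - ZMod.stdAddChar k) := by
    intro k hk
    have h0 : ZMod.toAddCircle k ≠ 0 := by simpa using hk
    rw [ZMod.toAddCircle_apply] at h0 ⊢
    refine franz_expZeta _ h0 _ ?_ ?_ ?_
    · rw [ZMod.stdAddChar_apply, ZMod.toCircle_apply]
      push_cast
      ring_nf
    · exact Circle.norm_coe (ZMod.toCircle k)
    · intro h
      apply hk
      apply ZMod.injective_stdAddChar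
      rw [h, AddChar.map_zero_eq_one]
  rw [key j hj, key (-j) (neg_ne_zero.2 hj)]
  have hz : ‖ZMod.stdAddChar j‖ = 1 := Circle.norm_coe (ZMod.toCircle j)
  have hz1 : ZMod.stdAddChar j ≠ 1 := by
    intro h
    apply hj
    apply ZMod.injective_stdAddChar
    rw [h, AddChar.map_zero_eq_one]
  have hc : ZMod.stdAddChar (-j) = (starRingEnd ℂ) (ZMod.stdAddChar j) := by
    rw [AddChar.map_neg_eq_inv, Complex.inv_eq_conj hz]
  have hre := franz_re_pos _ hz hz1
  have hc2 : 1 - ZMod.stdAddChar (-j) = (starRingEnd ℂ) (1 - ZMod.stdAddChar j) := by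
    rw [hc]; simp
  rw [hc2, Complex.log_conj, ← neg_add, Complex.add_conj, Complex.log_re, norm_sub_rev]
  · push_cast; ring
  · intro h
    have := Complex.abs_arg_lt_pi_div_two_iff.2 (Or.inl hre)
    rw [h, abs_of_pos Real.pi_pos] at this
    linarith [Real.pi_pos]

lemma franz_sum_ne_zero {N : ℕ} [NeZero N] (χ : DirichletCharacter ℂ N) (hp : χ.IsPrimitive)
    (h1 : χ ≠ 1) (he : χ.Even) :
    ∑ j : ZMod N, χ j * (Real.log ‖ZMod.stdAddChar j - 1‖ : ℂ) ≠ 0 := by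
  have hN : N ≠ 1 := by
    rintro rfl
    exact h1 (DirichletCharacter.level_one χ)
  have : Nontrivial (ZMod N) := ZMod.nontrivial_iff.2 hN
  have h0 : χ 0 = 0 := MulChar.map_nonunit _ not_isUnit_zero
  intro hsum
  have hd := ZMod.LFunction_dft (χ : ZMod N → ℂ) (s := 1) (Or.inl h0)
  have hd2 : ∑ j : ZMod N, χ j * expZeta (ZMod.toAddCircle (-j)) 1 =
      ∑ j : ZMod N, χ j * expZeta (ZMod.toAddCircle j) 1 := by
    refine Fintype.sum_equiv (Equiv.neg _) _ _ fun j => ?_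
    simp only [Equiv.neg_apply]
    rw [he.eval_neg]
  have hzero : ZMod.LFunction (ZMod.dft (χ : ZMod N → ℂ)) 1 = 0 := by
    have : 2 * ZMod.LFunction (ZMod.dft (χ : ZMod N → ℂ)) 1 = 0 := by
      rw [two_mul]
      nth_rewrite 1 [hd]
      rw [hd, hd2]
      nth_rewrite 2 [← hd2]
      rw [← Finset.sum_add_distrib]
      have : ∀ j : ZMod N, χ j * expZeta (ZMod.toAddCircle j) 1 +
          χ j * expZeta (ZMod.toAddCircle (-j)) 1 =
          -2 * (χ j * (Real.log ‖ZMod.stdAddChar j - 1‖ : ℂ)) := by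
        intro j
        by_cases hj : j = 0
        · rw [hj, h0]; simp
        · rw [← mul_add, franz_cosZeta j hj]; ring
      rw [Finset.sum_congr rfl fun j _ => this j, ← Finset.mul_sum, hsum, mul_zero]
    simpa using this
  have hdft : ∀ k, ZMod.dft (χ : ZMod N → ℂ) k =
      χ⁻¹ k * gaussSum χ ZMod.stdAddChar := by
    intro k
    rw [hp.fourierTransform_eq_inv_mul_gaussSum]
    congr 1
    have : (-k) = (-1) * k := by ring
    rw [this, map_mul, MulChar.inv_apply_eq_inv', he]
    simp
  have hL : ZMod.LFunction (ZMod.dft (χ : ZMod N → ℂ)) 1 =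
      gaussSum χ ZMod.stdAddChar * DirichletCharacter.LFunction χ⁻¹ 1 := by
    rw [DirichletCharacter.LFunction, ZMod.LFunction, ZMod.LFunction, mul_left_comm]
    congr 1
    rw [Finset.mul_sum]
    refine Fintype.sum_congr _ _ fun k => ?_
    rw [hdft]; ring
  rw [hL] at hzero
  rcases mul_eq_zero.1 hzero with h | h
  · have hz : ZMod.dft (χ : ZMod N → ℂ) = 0 := by
      funext k
      rw [hdft, h, mul_zero]; rfl
    have := (ZMod.dft (E := ℂ) (N := N)).map_eq_zero_iff.1 hz
    have := congrFun this 1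
    simp at this
  · exact DirichletCharacter.LFunction_apply_one_ne_zero (inv_ne_one.2 h1) h

lemma franz_twist (p : ℕ) [NeZero p] (a : (ZMod p)ˣ → ℤ)
    (hprod : ∀ η : ℂ, η ^ p = 1 → η ≠ 1 →
      ∏ j : (ZMod p)ˣ, (η ^ ((j : ZMod p).val) - 1) ^ (a j) = 1)
    (N : ℕ) [NeZero N] (hN : N ∣ p) (χ : DirichletCharacter ℂ N) (hp : χ.IsPrimitive)
    (h1 : χ ≠ 1) (he : χ.Even) :
    ∑ j : (ZMod p)ˣ, (a j : ℂ) * χ⁻¹ (ZMod.unitsMap hN j : (ZMod N)ˣ) = 0 := by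
  have hN1 : N ≠ 1 := by
    rintro rfl
    exact h1 (DirichletCharacter.level_one χ)
  have : Nontrivial (ZMod N) := ZMod.nontrivial_iff.2 hN1
  have hlog : ∀ k : ZMod N, IsUnit k → ∑ j : (ZMod p)ˣ,
      (a j : ℂ) * (Real.log ‖ZMod.stdAddChar (((ZMod.unitsMap hN j : (ZMod N)ˣ) : ZMod N) * k) - 1‖ : ℂ) = 0 := by
    intro k hk
    have hne : ∀ m : ZMod N, IsUnit m → ZMod.stdAddChar m - 1 ≠ 0 := by
      intro m hm h
      apply hm.ne_zero
      apply ZMod.injective_stdAddChar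
      rw [sub_eq_zero.1 h, AddChar.map_zero_eq_one]
    have h := hprod (ZMod.stdAddChar k) (by
      rw [← AddChar.map_nsmul_eq_pow, nsmul_eq_mul, (ZMod.natCast_eq_zero_iff p N).2 hN, zero_mul,
        AddChar.map_zero_eq_one]) (sub_ne_zero.1 (hne k hk))
    have h2 : ∀ j : (ZMod p)ˣ, ZMod.stdAddChar k ^ ((j : ZMod p).val) =
        ZMod.stdAddChar (((ZMod.unitsMap hN j : (ZMod N)ˣ) : ZMod N) * k) := by
      intro j
      rw [← AddChar.map_nsmul_eq_pow, nsmul_eq_mul, ZMod.unitsMap_val, ZMod.natCast_val]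
    simp_rw [h2] at h
    have h3 := congrArg (fun x => Real.log ‖x‖) h
    simp only [norm_prod, norm_zpow, norm_one, Real.log_one] at h3
    rw [Real.log_prod] at h3
    · simp only [Real.log_zpow] at h3
      exact_mod_cast h3
    · intro j _
      exact zpow_ne_zero _ (norm_ne_zero_iff.2 (hne _ ((Units.isUnit _).mul hk)))
  have hS := franz_sum_ne_zero χ hp h1 he
  refine (mul_eq_zero.1 ?_).resolve_right hS
  rw [Finset.sum_mul]
  have step : ∀ j : (ZMod p)ˣ, (a j : ℂ) * χ⁻¹ (ZMod.unitsMap hN j : (ZMod N)ˣ) *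
      ∑ k : ZMod N, χ k * (Real.log ‖ZMod.stdAddChar k - 1‖ : ℂ) =
      ∑ k : ZMod N, χ k * ((a j : ℂ) *
        (Real.log ‖ZMod.stdAddChar (((ZMod.unitsMap hN j : (ZMod N)ˣ) : ZMod N) * k) - 1‖ : ℂ)) := by
    intro j
    rw [← Equiv.sum_comp (Units.mulLeft (ZMod.unitsMap hN j)), Finset.mul_sum]
    refine Finset.sum_congr rfl fun k _ => ?_
    rw [Units.mulLeft_apply, map_mul, MulChar.inv_apply_eq_inv']
    have : χ (ZMod.unitsMap hN j : (ZMod N)ˣ) ≠ 0 := ((Units.isUnit _).map χ).ne_zero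
    field_simp
  rw [Finset.sum_congr rfl fun j _ => step j, Finset.sum_comm]
  refine Finset.sum_eq_zero fun k _ => ?_
  rw [← Finset.mul_sum]
  by_cases hk : IsUnit k
  · rw [hlog k hk, mul_zero]
  · rw [MulChar.map_nonunit _ hk, zero_mul]

lemma franz_char (p : ℕ) [NeZero p] (a : (ZMod p)ˣ → ℤ)
    (hsum : ∑ j : (ZMod p)ˣ, a j = 0)
    (hsymm : ∀ j : (ZMod p)ˣ, a (-j) = a j)
    (hprod : ∀ η : ℂ, η ^ p = 1 → η ≠ 1 →
      ∏ j : (ZMod p)ˣ, (η ^ ((j : ZMod p).val) - 1) ^ (a j) = 1)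
    (χ : DirichletCharacter ℂ p) :
    ∑ j : (ZMod p)ˣ, (a j : ℂ) * χ (j : ZMod p)⁻¹ = 0 := by
  have hinv : ∀ j : (ZMod p)ˣ, χ (j : ZMod p)⁻¹ = (χ (j : ZMod p))⁻¹ := by
    intro j
    rw [ZMod.inv_coe_unit, eq_comm]
    apply inv_eq_of_mul_eq_one_left
    rw [← map_mul]; simp
  rcases χ.even_or_odd with he | ho
  · by_cases h1 : χ = 1
    · subst h1
      have : ∀ j : (ZMod p)ˣ, (1 : DirichletCharacter ℂ p) (j : ZMod p) = 1 := fun j =>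
        MulChar.one_apply_coe j
      simp only [hinv, this, inv_one, mul_one]
      exact_mod_cast hsum
    · have : NeZero χ.conductor := ⟨χ.conductor_ne_zero⟩
      have hc := χ.changeLevel_primitiveCharacter
      have hval : ∀ j : (ZMod p)ˣ, χ j =
          χ.primitiveCharacter (ZMod.unitsMap χ.conductor_dvd_level j : (ZMod χ.conductor)ˣ) := by
        intro j
        conv_lhs => rw [← hc]
        rw [DirichletCharacter.changeLevel_eq_cast_of_dvd, ZMod.unitsMap_val]
      have h := franz_twist p a hprod χ.conductor χ.conductor_dvd_level χ.primitiveCharacter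
        χ.primitiveCharacter_isPrimitive ?_ ?_
      · simp only [MulChar.inv_apply_eq_inv', ← hval] at h
        simpa only [hinv] using h
      · intro h
        rw [h, map_one] at hc
        exact h1 hc.symm
      · have h := hval (-1)
        have e : ((ZMod.unitsMap χ.conductor_dvd_level (-1) : (ZMod χ.conductor)ˣ) : ZMod χ.conductor)
            = -1 := by
          simp [ZMod.unitsMap_def]
        rw [e, Units.val_neg, Units.val_one, he] at h
        exact h.symm
  · have h : ∑ j : (ZMod p)ˣ, (a j : ℂ) * χ (j : ZMod p)⁻¹ =
        - ∑ j : (ZMod p)ˣ, (a j : ℂ) * χ (j : ZMod p)⁻¹ := by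
      conv_rhs => rw [← Equiv.sum_comp (Equiv.neg _)]
      rw [← Finset.sum_neg_distrib]
      refine Finset.sum_congr rfl fun j _ => ?_
      rw [Equiv.neg_apply, hsymm, hinv, hinv, Units.val_neg, ho.eval_neg, inv_neg]
      ring
    exact self_eq_neg.1 h

end Franz

/-- Franz's independence lemma: let `p ≥ 1` and let `S = (ℤ/p)ˣ` be the residues coprime
to `p`.  If `a : S → ℤ` satisfies `∑ a_j = 0`, `a_j = a_{-j}`, and
`∏_{j ∈ S} (η^j − 1)^{a_j} = 1` for every `p`-th root of unity `η ≠ 1`, then `a = 0`. -/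
theorem franz_independence_lemma (p : ℕ) [NeZero p] (a : (ZMod p)ˣ → ℤ)
    (hsum : ∑ j : (ZMod p)ˣ, a j = 0)
    (hsymm : ∀ j : (ZMod p)ˣ, a (-j) = a j)
    (hprod : ∀ η : ℂ, η ^ p = 1 → η ≠ 1 →
      ∏ j : (ZMod p)ˣ, (η ^ ((j : ZMod p).val) - 1) ^ (a j) = 1) :
    ∀ j, a j = 0 := by
  intro i
  have h := Franz.franz_char p a hsum hsymm hprod
  have h2 : ∑ χ : DirichletCharacter ℂ p, ∑ j : (ZMod p)ˣ,
      ((a j : ℂ) * χ (j : ZMod p)⁻¹) * χ (i : ZMod p) = 0 := by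
    refine Finset.sum_eq_zero fun χ _ => ?_
    rw [← Finset.sum_mul, h χ, zero_mul]
  rw [Finset.sum_comm] at h2
  have h3 : ∀ j : (ZMod p)ˣ, ∑ χ : DirichletCharacter ℂ p,
      ((a j : ℂ) * χ (j : ZMod p)⁻¹) * χ (i : ZMod p) =
      if j = i then (a j : ℂ) * (p.totient : ℂ) else 0 := by
    intro j
    simp_rw [mul_assoc]
    rw [← Finset.mul_sum, DirichletCharacter.sum_char_inv_mul_char_eq ℂ j.isUnit]
    simp only [Units.val_inj, mul_ite, mul_zero]
  rw [Finset.sum_congr rfl fun j _ => h3 j, Finset.sum_ite_eq' Finset.univ i,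
    if_pos (Finset.mem_univ _)] at h2
  have hp : (p.totient : ℂ) ≠ 0 :=
    Nat.cast_ne_zero.2 (Nat.totient_pos.2 (NeZero.pos p)).ne'
  exact_mod_cast (mul_eq_zero.1 h2).resolve_right hp
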